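/- Let k ≥ 1 and let M be a (2^k)×(2^k) complex matrix. Then there exists a finite list U_1, …, U_s of (2^k)×(2^k) unitary matrices with s ≤ k · 2^(k−1), each of which agrees with the identity matrix outside the rows and columns indexed by some two-element set of indices, such that their product U = U_s * ⋯ * U_1 satisfies: every diagonal entry of U * M * Uᴴ equals (trace M) / 2^k. -/

import Mathlib

open scoped Matrix

namespace Equidiagonalization

/-- A unitary matrix agreeing with the identity outside the rows and columns indexed by some
two-element set. -/
def IsTwoLevelUnitary {ι : Type*} [Fintype ι] [DecidableEq ι] (V : Matrix ι ι ℂ) : Prop :=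
  V ∈ Matrix.unitaryGroup ι ℂ ∧
    ∃ i j : ι, i ≠ j ∧ ∀ p q : ι, p ∉ ({i, j} : Set ι) ∨ q ∉ ({i, j} : Set ι) →
      V p q = (1 : Matrix ι ι ℂ) p q

/-- `N` is obtained from `M` by conjugation with a product of at most `s` two-level unitaries. -/
def Reachable {ι : Type*} [Fintype ι] [DecidableEq ι] (s : ℕ) (M N : Matrix ι ι ℂ) : Prop :=
  ∃ L : List (Matrix ι ι ℂ), L.length ≤ s ∧ (∀ V ∈ L, IsTwoLevelUnitary V) ∧
    N = L.prod * M * L.prodᴴ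

/-- The matrix acting as `!![a, b; c, d]` on the coordinates `i, j` and as the identity on the
others. -/
def twoLevel {ι : Type*} [DecidableEq ι] (i j : ι) (a b c d : ℂ) : Matrix ι ι ℂ :=
  Matrix.of fun p q =>
    if p = i then (if q = i then a else 0) + (if q = j then b else 0)
    else if p = j then (if q = i then c else 0) + (if q = j then d else 0)
    else if q = p then 1 else 0

section

variable {ι : Type*} [Fintype ι] [DecidableEq ι]

lemma Reachable.refl (M : Matrix ι ι ℂ) : Reachable 0 M M :=
  ⟨[], by simp⟩

lemma Reachable.trans {s t : ℕ} {M N P : Matrix ι ι ℂ} (h₁ : Reachable s M N)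
    (h₂ : Reachable t N P) : Reachable (s + t) M P := by
  obtain ⟨L₁, hl₁, hV₁, rfl⟩ := h₁
  obtain ⟨L₂, hl₂, hV₂, rfl⟩ := h₂
  refine ⟨L₂ ++ L₁, by simp; omega, fun V hV => ?_, ?_⟩
  · rcases List.mem_append.1 hV with h | h
    exacts [hV₂ V h, hV₁ V h]
  · simp [Matrix.mul_assoc, Matrix.conjTranspose_mul]

lemma IsTwoLevelUnitary.reachable {V : Matrix ι ι ℂ} (hV : IsTwoLevelUnitary V)
    (M : Matrix ι ι ℂ) : Reachable 1 M (V * M * Vᴴ) :=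
  ⟨[V], by simpa using hV⟩

lemma twoLevel_mul_apply (i j : ι) (a b c d : ℂ) (A : Matrix ι ι ℂ) (p q : ι) :
    (twoLevel i j a b c d * A) p q =
      if p = i then a * A i q + b * A j q
      else if p = j then c * A i q + d * A j q else A p q := by
  simp only [Matrix.mul_apply, twoLevel, Matrix.of_apply]
  split_ifs <;> simp [add_mul, Finset.sum_add_distrib]

lemma mul_conjTranspose_twoLevel_apply (i j : ι) (a b c d : ℂ) (A : Matrix ι ι ℂ) (p q : ι) :
    (A * (twoLevel i j a b c d)ᴴ) p q =
      if q = i then A p i * star a + A p j * star b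
      else if q = j then A p i * star c + A p j * star d else A p q := by
  have h := twoLevel_mul_apply i j a b c d Aᴴ q p
  rw [← star_inj, ← Matrix.conjTranspose_apply, Matrix.conjTranspose_mul,
    Matrix.conjTranspose_conjTranspose, h]
  split_ifs <;> simp [Matrix.conjTranspose_apply, mul_comm]

/-- A real rotation with cosine `c` and sine `s`, twisted by a phase `w`, in the `i, j` plane. -/
lemma isTwoLevelUnitary_rotation {i j : ι} (hij : i ≠ j) {c s : ℝ} (hcs : c ^ 2 + s ^ 2 = 1)
    {w : ℂ} (hw : w * star w = 1) :
    IsTwoLevelUnitary (twoLevel i j c (s * w) (-(s * star w)) c) := by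
  have hcs' : (c : ℂ) ^ 2 + (s : ℂ) ^ 2 = 1 := by exact_mod_cast hcs
  refine ⟨?_, i, j, hij, fun p q hpq => ?_⟩
  · rw [Matrix.mem_unitaryGroup_iff, Matrix.star_eq_conjTranspose]
    ext p q
    rw [mul_conjTranspose_twoLevel_apply]
    simp only [twoLevel, Matrix.of_apply, Matrix.one_apply]
    have hs : ∀ r : ℝ, star (r : ℂ) = r := Complex.conj_ofReal
    by_cases hpi : p = i <;> by_cases hpj : p = j <;> by_cases hqi : q = i <;>
      by_cases hqj : q = j <;> by_cases hpq : p = q <;>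
      simp_all [hij.symm, eq_comm] <;> grind
  · simp only [twoLevel, Matrix.of_apply, Matrix.one_apply]
    simp only [Set.mem_insert_iff, Set.mem_singleton_iff, not_or] at hpq
    grind

end

/-- The phase making `star w * b + w * e` a real multiple of `δ`. -/
lemma exists_phase (δ b e : ℂ) (hδ : δ ≠ 0) :
    ∃ w : ℂ, w * star w = 1 ∧ ∃ r : ℝ, star w * b + w * e = r * δ := by
  set z := star δ * e - δ * star b with hz
  obtain ⟨w, hw, hwz⟩ : ∃ w : ℂ, w * star w = 1 ∧ (w * z).im = 0 := by
    by_cases h : z = 0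
    · exact ⟨1, by simp, by simp [h]⟩
    · have hn : (‖z‖ : ℂ) ≠ 0 := by simpa using h
      have hzz : z * star z = (‖z‖ : ℂ) ^ 2 := Complex.mul_conj' z
      have hs : star (‖z‖ : ℂ) = ‖z‖ := Complex.conj_ofReal _
      refine ⟨star z / ‖z‖, ?_, ?_⟩
      · rw [star_div₀, star_star, hs]
        field_simp
        rw [mul_comm, hzz]
      · have : star z / ‖z‖ * z = (‖z‖ : ℝ) := by
          field_simp
          rw [mul_comm, hzz]
        rw [this, Complex.ofReal_im]
  refine ⟨w, hw, (star δ * (star w * b + w * e)).re / Complex.normSq δ, ?_⟩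
  have him : (star δ * (star w * b + w * e)).im = 0 := by
    rw [← hwz, hz]
    simp [Complex.mul_im, Complex.mul_re, Complex.sub_im]
    ring
  have hre : ((star δ * (star w * b + w * e)).re : ℂ) = star δ * (star w * b + w * e) :=
    Complex.ext (by simp) (by rw [him]; simp)
  have hn : (Complex.normSq δ : ℂ) = δ * star δ := (Complex.mul_conj δ).symm
  have hδ' : star δ ≠ 0 := star_ne_zero.2 hδ
  rw [Complex.ofReal_div, hre, hn]
  field_simp

lemma exists_angle (r : ℝ) : ∃ c s : ℝ, c ^ 2 + s ^ 2 = 1 ∧ c ^ 2 - s ^ 2 + 2 * r * c * s = 0 := by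
  set t := (Real.arctan r + Real.pi / 2) / 2 with ht
  refine ⟨Real.cos t, Real.sin t, Real.cos_sq_add_sin_sq t, ?_⟩
  have h2 : 2 * t = Real.arctan r + Real.pi / 2 := by rw [ht]; ring
  have hc : Real.cos (2 * t) = -Real.sin (Real.arctan r) := by rw [h2, Real.cos_add_pi_div_two]
  have hs : Real.sin (2 * t) = Real.cos (Real.arctan r) := by rw [h2, Real.sin_add_pi_div_two]
  rw [Real.cos_two_mul'] at hc
  rw [Real.sin_two_mul] at hs
  have hr : Real.sin (Real.arctan r) = r * Real.cos (Real.arctan r) := by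
    rw [← Real.tan_mul_cos (Real.cos_arctan_pos r).ne', Real.tan_arctan]
  linear_combination hc + r * hs - hr

section

variable {ι : Type*} [Fintype ι] [DecidableEq ι]

lemma exists_rotation_equalizing (a b e d : ℂ) :
    ∃ (c s : ℝ) (w : ℂ), c ^ 2 + s ^ 2 = 1 ∧ w * star w = 1 ∧
      c ^ 2 * a + s ^ 2 * d + c * s * (star w * b + w * e) = (a + d) / 2 := by
  by_cases hδ : a - d = 0
  · refine ⟨1, 0, 1, by simp, by simp, ?_⟩
    rw [sub_eq_zero.1 hδ]
    simp
  · obtain ⟨w, hw, r, hr⟩ := exists_phase (a - d) b e hδ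
    obtain ⟨c, s, hcs, h⟩ := exists_angle r
    refine ⟨c, s, w, hcs, hw, ?_⟩
    have hcs' : (c : ℂ) ^ 2 + (s : ℂ) ^ 2 = 1 := by exact_mod_cast hcs
    have h' : (c : ℂ) ^ 2 - (s : ℂ) ^ 2 + 2 * r * c * s = 0 := by exact_mod_cast h
    rw [hr]
    linear_combination (a + d) / 2 * hcs' + (a - d) / 2 * h'

/-- One two-level unitary averages two diagonal entries and keeps the others. -/
lemma exists_reachable_average_pair (M : Matrix ι ι ℂ) {i j : ι} (hij : i ≠ j) :
    ∃ N, Reachable 1 M N ∧ N i i = (M i i + M j j) / 2 ∧ N j j = (M i i + M j j) / 2 ∧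
      ∀ p, p ≠ i → p ≠ j → N p p = M p p := by
  obtain ⟨c, s, w, hcs, hw, h⟩ := exists_rotation_equalizing (M i i) (M i j) (M j i) (M j j)
  have hcs' : (c : ℂ) ^ 2 + (s : ℂ) ^ 2 = 1 := by exact_mod_cast hcs
  have hs : ∀ r : ℝ, star (r : ℂ) = r := Complex.conj_ofReal
  refine ⟨_, (isTwoLevelUnitary_rotation hij hcs hw).reachable M, ?_, ?_, fun p hpi hpj => ?_⟩
  · simp only [mul_conjTranspose_twoLevel_apply, twoLevel_mul_apply, if_true, star_mul', hs]
    linear_combination h + s ^ 2 * M j j * hw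
  · simp only [mul_conjTranspose_twoLevel_apply, twoLevel_mul_apply, if_true, if_neg hij.symm,
      star_mul', star_neg, star_star, hs]
    linear_combination -h + s ^ 2 * M i i * hw + (M i i + M j j) * hcs'
  · simp only [mul_conjTranspose_twoLevel_apply, twoLevel_mul_apply, if_neg hpi, if_neg hpj]

/-- Pairing off two disjoint index sets of equal size, with constant diagonals `m₁` and `m₂`. -/
lemma exists_reachable_average_blocks (n : ℕ) (m₁ m₂ : ℂ) (S T : Finset ι) (hS : S.card = n)
    (hT : T.card = n) (hST : Disjoint S T) (M : Matrix ι ι ℂ) (h₁ : ∀ p ∈ S, M p p = m₁)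
    (h₂ : ∀ p ∈ T, M p p = m₂) :
    ∃ N, Reachable n M N ∧ (∀ p ∈ S ∪ T, N p p = (m₁ + m₂) / 2) ∧
      ∀ p ∉ S ∪ T, N p p = M p p := by
  induction n generalizing S T M with
  | zero =>
    rw [Finset.card_eq_zero] at hS hT
    subst hS hT
    exact ⟨M, .refl M, by simp, by simp⟩
  | succ n ih =>
    obtain ⟨i, S, hiS, rfl, hSn⟩ := Finset.card_eq_succ.1 hS
    obtain ⟨j, T, hjT, rfl, hTn⟩ := Finset.card_eq_succ.1 hT
    simp only [Finset.disjoint_insert_left, Finset.disjoint_insert_right, Finset.mem_insert,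
      not_or] at hST
    obtain ⟨⟨hji, hjS⟩, hiT, hST⟩ := hST
    obtain ⟨N, hN, hNS, hNo⟩ := ih S T hSn hTn hST M (fun p hp => h₁ p (by simp [hp]))
      (fun p hp => h₂ p (by simp [hp]))
    obtain ⟨P, hP, hPi, hPj, hPo⟩ := exists_reachable_average_pair N (Ne.symm hji)
    have hNi : N i i = m₁ := by rw [hNo i (by simp [hiS, hiT]), h₁ i (by simp)]
    have hNj : N j j = m₂ := by rw [hNo j (by simp [hjS, hjT]), h₂ j (by simp)]
    rw [hNi, hNj] at hPi hPj
    refine ⟨P, hN.trans hP, fun p hp => ?_, fun p hp => ?_⟩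
    · by_cases hpi : p = i
      · rw [hpi, hPi]
      by_cases hpj : p = j
      · rw [hpj, hPj]
      rw [hPo p hpi hpj, hNS p (by simpa [hpi, hpj] using hp)]
    · simp only [Finset.mem_union, Finset.mem_insert, not_or] at hp
      rw [hPo p hp.1.1 hp.2.1, hNo p (by simp [hp])]

/-- The diagonal on an index set of size `2 ^ k` can be made constant with `k * 2 ^ (k - 1)`
two-level unitaries, keeping the other diagonal entries. -/
lemma exists_reachable_equidiagonal (k : ℕ) (S : Finset ι) (hS : S.card = 2 ^ k)
    (M : Matrix ι ι ℂ) :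
    ∃ N, Reachable (k * 2 ^ (k - 1)) M N ∧ (∀ p ∈ S, N p p = (∑ q ∈ S, M q q) / 2 ^ k) ∧
      ∀ p ∉ S, N p p = M p p := by
  induction k generalizing S M with
  | zero =>
    obtain ⟨i, rfl⟩ := Finset.card_eq_one.1 hS
    exact ⟨M, by simpa using Reachable.refl M, by simp, by simp⟩
  | succ k ih =>
    obtain ⟨A, hAS, hA⟩ := Finset.exists_subset_card_eq (s := S) (n := 2 ^ k)
      (by rw [hS]; exact Nat.pow_le_pow_right two_pos k.le_succ)
    have hB : (S \ A).card = 2 ^ k := by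
      rw [Finset.card_sdiff_of_subset hAS, hS, hA, pow_succ]
      omega
    have hd : Disjoint A (S \ A) := Finset.disjoint_sdiff
    obtain ⟨N, hN, hNA, hNo⟩ := ih A hA M
    obtain ⟨P, hP, hPB, hPo⟩ := ih (S \ A) hB N
    obtain ⟨Q, hQ, hQS, hQo⟩ := exists_reachable_average_blocks (2 ^ k) _ _ A (S \ A) hA hB hd P
      (fun p hp => (hPo p (Finset.disjoint_left.1 hd hp)).trans (hNA p hp)) hPB
    rw [Finset.union_sdiff_of_subset hAS] at hQS hQo
    refine ⟨Q, ?_, fun p hp => ?_, fun p hp => ?_⟩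
    · have hlen : k * 2 ^ (k - 1) + k * 2 ^ (k - 1) + 2 ^ k = (k + 1) * 2 ^ (k + 1 - 1) := by
        cases k with
        | zero => simp
        | succ k => simp only [Nat.add_sub_cancel]; ring
      exact hlen ▸ (hN.trans hP).trans hQ
    · rw [hQS p hp, Finset.sum_congr rfl fun q hq => hNo q (Finset.mem_sdiff.1 hq).2,
        ← Finset.sum_sdiff hAS]
      field_simp
      ring
    · rw [hQo p hp, hPo p (by simp [hp]), hNo p (fun h => hp (hAS h))]

end

end Equidiagonalization

/-- Quantitative equidiagonalization: a `2^k × 2^k` complex matrix can be equidiagonalized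
by a product `U = U_s * ⋯ * U_1` of at most `k·2^(k−1)` two-level unitaries, i.e.
unitaries agreeing with the identity outside the rows and columns indexed by some
two-element set `{i, j}` of indices. -/
theorem exists_twoLevel_list_equidiagonalize_pow_two (k : ℕ) (hk : 1 ≤ k)
    (M : Matrix (Fin (2 ^ k)) (Fin (2 ^ k)) ℂ) :
    ∃ L : List (Matrix (Fin (2 ^ k)) (Fin (2 ^ k)) ℂ),
      L.length ≤ k * 2 ^ (k - 1) ∧
      (∀ V ∈ L, V ∈ Matrix.unitaryGroup (Fin (2 ^ k)) ℂ ∧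
        ∃ i j : Fin (2 ^ k), i ≠ j ∧
          ∀ p q : Fin (2 ^ k),
            p ∉ ({i, j} : Set (Fin (2 ^ k))) ∨ q ∉ ({i, j} : Set (Fin (2 ^ k))) →
              V p q = (1 : Matrix (Fin (2 ^ k)) (Fin (2 ^ k)) ℂ) p q) ∧
      (∀ d : Fin (2 ^ k),
        (L.prod * M * L.prodᴴ) d d = M.trace / (2 ^ k : ℂ)) := by
  obtain ⟨_, ⟨L, hlen, hL, rfl⟩, hdiag, -⟩ :=
    Equidiagonalization.exists_reachable_equidiagonal k Finset.univ (by simp) M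
  exact ⟨L, hlen, hL, fun d => hdiag d (Finset.mem_univ d)⟩
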